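/- arXiv:2110.06489 — 3 statements merged into one kernel-verified Lean document; each statement's English description precedes it below -/
import Mathlib

section
/- Let G be a connected, simple graph with maximum degree at most 3, nonnegative Ricci curvature, and diameter at least 6, and let P = v_0 v_1 ⋯ v_l be a geodesic path with l ≥ 4. If for some i with 2 ≤ i ≤ l − 1 the vertex v_i has a neighbor u_i ∉ {v_{i−1}, v_{i+1}} with d(v_0, u_i) = i − 1, then for every j with i ≤ j ≤ l − 1, the vertex v_j has a neighbor u_j ∉ {v_{j−1}, v_{j+1}} with d(v_0, u_j) = j − 1. -/
open SimpleGraph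

variable {V : Type*}

/-- Combinatorial (unnormalized) graph Laplacian. -/
def lapl (G : SimpleGraph V) [G.LocallyFinite] (f : V → ℝ) (x : V) : ℝ :=
  ∑ y ∈ G.neighborFinset x, (f y - f x)

/-- Lin-Lu-Yau-Ollivier Ricci curvature (limit-free definition):
`κ(u,v) = inf { Δf(u) − Δf(v) : f 1-Lipschitz w.r.t. graph distance, f v − f u = 1 }`. -/
noncomputable def ricci (G : SimpleGraph V) [G.LocallyFinite] (u v : V) : ℝ :=
  sInf { r : ℝ | ∃ f : V → ℝ,
    (∀ x y : V, |f x - f y| ≤ (G.dist x y : ℝ)) ∧ f v - f u = 1 ∧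
    r = lapl G f u - lapl G f v }

/-- Nonnegative Ricci curvature on every edge. -/
def NonnegRicci (G : SimpleGraph V) [G.LocallyFinite] : Prop :=
  ∀ u v : V, G.Adj u v → 0 ≤ ricci G u v

/-!
Let `d` be the distance from `v 0`, a 1-Lipschitz function. Since `d` increases by one along each
edge of the geodesic, it is a test function for the curvature of that edge, so nonnegative curvature
makes `Δd (v k)` nonincreasing in `k`. At each vertex `Δd` counts the neighbors farther from `v 0`
minus the closer ones. A vertex of degree at most 3 with two closer neighbors has `Δd < 0`; hence
`Δd (v j) < 0` for all later `j`, and as `v (j + 1)` is a farther neighbor of `v j`, there must be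
at least two closer ones.
-/

section Curvature

variable {G : SimpleGraph V} [G.LocallyFinite]

lemma abs_lapl_le_degree {f : V → ℝ} {x : V} (hf : ∀ y, G.Adj x y → |f y - f x| ≤ 1) :
    |lapl G f x| ≤ G.degree x :=
  calc |lapl G f x| ≤ ∑ y ∈ G.neighborFinset x, |f y - f x| := Finset.abs_sum_le_sum_abs _ _
    _ ≤ ∑ _y ∈ G.neighborFinset x, (1 : ℝ) :=
        Finset.sum_le_sum fun y hy => hf y ((G.mem_neighborFinset x y).1 hy)
    _ = G.degree x := by simp

lemma ricci_le_lapl_sub_lapl {f : V → ℝ} {u v : V}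
    (hf : ∀ x y : V, |f x - f y| ≤ (G.dist x y : ℝ)) (huv : f v - f u = 1) :
    ricci G u v ≤ lapl G f u - lapl G f v := by
  -- `sInf` is a lower bound only for sets bounded below, which local finiteness provides.
  refine csInf_le ⟨-(G.degree u + G.degree v : ℝ), ?_⟩ ⟨f, hf, huv, rfl⟩
  rintro r ⟨g, hg, -, rfl⟩
  have abs_lapl_le (x : V) : |lapl G g x| ≤ G.degree x :=
    abs_lapl_le_degree fun y hxy => by simpa [dist_eq_one_iff_adj.2 hxy.symm] using hg y x
  linarith [(abs_le.1 (abs_lapl_le u)).1, (abs_le.1 (abs_lapl_le v)).2]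

end Curvature

lemma abs_dist_sub_dist_le {G : SimpleGraph V} (hconn : G.Connected) (o x y : V) :
    |(G.dist o x : ℝ) - G.dist o y| ≤ G.dist x y := by
  have hx : (G.dist o x : ℝ) ≤ G.dist o y + G.dist x y := by
    rw [G.dist_comm (u := x)]
    exact_mod_cast hconn.dist_triangle
  have hy : (G.dist o y : ℝ) ≤ G.dist o x + G.dist x y := mod_cast hconn.dist_triangle
  exact abs_sub_le_iff.2 ⟨by linarith, by linarith⟩

section DistanceLaplacian

variable {G : SimpleGraph V} [G.LocallyFinite]

lemma NonnegRicci.lapl_dist_le (hric : NonnegRicci G) (hconn : G.Connected) {o x y : V}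
    (hxy : G.Adj x y) (hd : G.dist o y = G.dist o x + 1) :
    lapl G (fun z => (G.dist o z : ℝ)) y ≤ lapl G (fun z => (G.dist o z : ℝ)) x :=
  sub_nonneg.1 <| (hric x y hxy).trans <|
    ricci_le_lapl_sub_lapl (abs_dist_sub_dist_le hconn o) (by simp [hd])

variable (G) in
/-- The neighbors of `x` one step closer to the base point `o` than `x`, counted by the negative
part of the Laplacian of the distance from `o`. -/
noncomputable def closerNeighbors (o x : V) : Finset V :=
  {y ∈ G.neighborFinset x | G.dist o y + 1 = G.dist o x}

variable (G) in
/-- The neighbors of `x` one step farther from the base point `o` than `x`, counted by the positive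
part of the Laplacian of the distance from `o`. -/
noncomputable def fartherNeighbors (o x : V) : Finset V :=
  {y ∈ G.neighborFinset x | G.dist o y = G.dist o x + 1}

lemma mem_closerNeighbors {o x y : V} :
    y ∈ closerNeighbors G o x ↔ G.Adj x y ∧ G.dist o y + 1 = G.dist o x := by
  simp [closerNeighbors]

lemma mem_fartherNeighbors {o x y : V} :
    y ∈ fartherNeighbors G o x ↔ G.Adj x y ∧ G.dist o y = G.dist o x + 1 := by
  simp [fartherNeighbors]

lemma mem_fartherNeighbors_iff_mem_closerNeighbors {o x y : V} :
    y ∈ fartherNeighbors G o x ↔ x ∈ closerNeighbors G o y := by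
  rw [mem_fartherNeighbors, mem_closerNeighbors, G.adj_comm, eq_comm]

lemma lapl_dist_eq_card_sub_card (o x : V) :
    lapl G (fun z => (G.dist o z : ℝ)) x =
      (fartherNeighbors G o x).card - (closerNeighbors G o x).card := by
  rw [fartherNeighbors, closerNeighbors, Finset.natCast_card_filter, Finset.natCast_card_filter,
    ← Finset.sum_sub_distrib]
  refine Finset.sum_congr rfl fun y hy => ?_
  have hxy : G.Adj x y := (G.mem_neighborFinset x y).1 hy
  have hcases : G.dist o y = G.dist o x ∨ G.dist o y = G.dist o x + 1 ∨
      G.dist o y + 1 = G.dist o x := by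
    have := hxy.diff_dist_adj (u := o)
    omega
  rcases hcases with h | h | h
  · simp [h]
  · simp [h, add_assoc]
  · simp [← h, add_assoc]

lemma lapl_dist_neg_iff {o x : V} :
    lapl G (fun z => (G.dist o z : ℝ)) x < 0 ↔
      (fartherNeighbors G o x).card < (closerNeighbors G o x).card := by
  rw [lapl_dist_eq_card_sub_card, sub_neg, Nat.cast_lt]

lemma card_fartherNeighbors_add_card_closerNeighbors_le (o x : V) :
    (fartherNeighbors G o x).card + (closerNeighbors G o x).card ≤ G.degree x := by
  classical
  have hdisj : Disjoint (fartherNeighbors G o x) (closerNeighbors G o x) :=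
    Finset.disjoint_filter.2 fun y _ hfar hclose => by omega
  rw [← Finset.card_union_of_disjoint hdisj]
  exact Finset.card_le_card
    (Finset.union_subset (Finset.filter_subset _ _) (Finset.filter_subset _ _))

lemma lapl_dist_neg_of_degree_lt {o x : V}
    (hx : G.degree x < 2 * (closerNeighbors G o x).card) :
    lapl G (fun z => (G.dist o z : ℝ)) x < 0 := by
  have := card_fartherNeighbors_add_card_closerNeighbors_le (G := G) o x
  exact lapl_dist_neg_iff.2 (by omega)

lemma exists_mem_closerNeighbors_ne {o x : V} (hneg : lapl G (fun z => (G.dist o z : ℝ)) x < 0)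
    (hfar : (fartherNeighbors G o x).Nonempty) (a : V) :
    ∃ b ∈ closerNeighbors G o x, b ≠ a :=
  Finset.exists_mem_ne (Nat.lt_of_le_of_lt hfar.card_pos (lapl_dist_neg_iff.1 hneg)) a

lemma NonnegRicci.antitoneOn_lapl_dist (hric : NonnegRicci G) (hconn : G.Connected) {o : V}
    {l : ℕ} {v : ℕ → V} (hfar : ∀ k < l, v (k + 1) ∈ fartherNeighbors G o (v k)) :
    AntitoneOn (fun k => lapl G (fun z => (G.dist o z : ℝ)) (v k)) (Set.Iic l) :=
  antitoneOn_of_add_one_le Set.ordConnected_Iic fun k _ _ hk =>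
    have ⟨hadj, hd⟩ := mem_fartherNeighbors.1 (hfar k hk)
    hric.lapl_dist_le hconn hadj hd

end DistanceLaplacian

section Geodesic

variable {G : SimpleGraph V} {l : ℕ} {v : ℕ → V}

lemma dist_eq_of_dist_eq_length (hadj : ∀ k < l, G.Adj (v k) (v (k + 1)))
    (hgeo : G.dist (v 0) (v l) = l) {k : ℕ} (hk : k ≤ l) : G.dist (v 0) (v k) = k := by
  -- The defect `d(v 0, v k) - k` never increases, and it vanishes at both ends.
  have hanti : AntitoneOn (fun k => (G.dist (v 0) (v k) : ℤ) - k) (Set.Iic l) := by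
    refine antitoneOn_of_add_one_le Set.ordConnected_Iic fun m _ _ hm => ?_
    have := (hadj m hm).diff_dist_adj (u := v 0)
    push_cast
    omega
  have hleft := hanti (Nat.zero_le l) hk (Nat.zero_le k)
  have hright := hanti hk Set.self_mem_Iic hk
  simp only [dist_self, hgeo] at hleft hright
  omega

variable [G.LocallyFinite]

lemma succ_mem_fartherNeighbors (hadj : ∀ k < l, G.Adj (v k) (v (k + 1)))
    (hgeo : G.dist (v 0) (v l) = l) {k : ℕ} (hk : k < l) :
    v (k + 1) ∈ fartherNeighbors G (v 0) (v k) := by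
  rw [mem_fartherNeighbors, dist_eq_of_dist_eq_length hadj hgeo hk,
    dist_eq_of_dist_eq_length hadj hgeo hk.le]
  exact ⟨hadj k hk, rfl⟩

end Geodesic

theorem downward_neighbors_propagate_right_general {G : SimpleGraph V} [G.LocallyFinite]
    (hconn : G.Connected) (hric : NonnegRicci G) {l : ℕ} {v : ℕ → V}
    (hadj : ∀ k < l, G.Adj (v k) (v (k + 1))) (hgeo : G.dist (v 0) (v l) = l)
    {i : ℕ} (hi : 0 < i) (hdeg : G.degree (v i) ≤ 3)
    (hex : ∃ u : V, G.Adj (v i) u ∧ u ≠ v (i - 1) ∧ G.dist (v 0) u = i - 1)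
    {j : ℕ} (hij : i ≤ j) (hj : j < l) :
    ∃ u : V, G.Adj (v j) u ∧ u ≠ v (j - 1) ∧ u ≠ v (j + 1) ∧ G.dist (v 0) u = j - 1 := by
  obtain ⟨u, hu, hu_ne, hdu⟩ := hex
  have hdist (k : ℕ) (hk : k ≤ l) : G.dist (v 0) (v k) = k :=
    dist_eq_of_dist_eq_length hadj hgeo hk
  have hfar (k : ℕ) (hk : k < l) : v (k + 1) ∈ fartherNeighbors G (v 0) (v k) :=
    succ_mem_fartherNeighbors hadj hgeo hk
  have hprev : v (i - 1) ∈ closerNeighbors G (v 0) (v i) := by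
    simpa only [Nat.sub_add_cancel hi] using
      mem_fartherNeighbors_iff_mem_closerNeighbors.1 (hfar (i - 1) (by omega))
  have hcloser : u ∈ closerNeighbors G (v 0) (v i) :=
    mem_closerNeighbors.2 ⟨hu, by rw [hdu, hdist i (by omega), Nat.sub_add_cancel hi]⟩
  have htwo : 1 < (closerNeighbors G (v 0) (v i)).card :=
    Finset.one_lt_card.2 ⟨u, hcloser, v (i - 1), hprev, hu_ne⟩
  have hneg_i : lapl G (fun z => (G.dist (v 0) z : ℝ)) (v i) < 0 :=
    lapl_dist_neg_of_degree_lt (by omega)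
  have hneg_j : lapl G (fun z => (G.dist (v 0) z : ℝ)) (v j) < 0 :=
    (hric.antitoneOn_lapl_dist hconn hfar (hij.trans hj.le) hj.le hij).trans_lt hneg_i
  obtain ⟨w, hw, hw_ne⟩ := exists_mem_closerNeighbors_ne hneg_j ⟨_, hfar j hj⟩ (v (j - 1))
  obtain ⟨hjw, hdw⟩ := mem_closerNeighbors.1 hw
  have hdw' : G.dist (v 0) w + 1 = j := hdw.trans (hdist j hj.le)
  refine ⟨w, hjw, hw_ne, ?_, by omega⟩
  rintro rfl
  have := hdist (j + 1) hj
  omega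

/-- Let `P = v 0, …, v l` (`l ≥ 4`) be a geodesic path in a connected
simple graph `G` with maximum degree at most 3, nonnegative Ricci curvature and diameter
at least 6. If some `v i` (`2 ≤ i ≤ l − 1`) has a third neighbor at distance `i − 1` from
`v 0`, then so does every `v j` with `i ≤ j ≤ l − 1`. -/
theorem downward_neighbors_propagate_right (G : SimpleGraph V) [G.LocallyFinite]
    (hconn : G.Connected) (hdeg : ∀ x : V, G.degree x ≤ 3) (hric : NonnegRicci G)
    (hdiam : ∃ x y : V, 6 ≤ G.dist x y)
    (l : ℕ) (hl : 4 ≤ l) (v : ℕ → V)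
    (hadj : ∀ i < l, G.Adj (v i) (v (i + 1)))
    (hinj : ∀ i ≤ l, ∀ j ≤ l, v i = v j → i = j)
    (hgeo : G.dist (v 0) (v l) = l)
    (i : ℕ) (hi1 : 2 ≤ i) (hi2 : i ≤ l - 1)
    (hex : ∃ u : V, G.Adj (v i) u ∧ u ≠ v (i - 1) ∧ u ≠ v (i + 1) ∧
      G.dist (v 0) u = i - 1) :
    ∀ j : ℕ, i ≤ j → j ≤ l - 1 →
      ∃ u : V, G.Adj (v j) u ∧ u ≠ v (j - 1) ∧ u ≠ v (j + 1) ∧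
        G.dist (v 0) u = j - 1 :=
  fun _ hij hj => downward_neighbors_propagate_right_general hconn hric hadj hgeo (by omega)
    (hdeg _) (hex.imp fun _ ⟨hu, hu_ne, _, hdu⟩ => ⟨hu, hu_ne, hdu⟩) hij (by omega)
end

section
/- Let G = (V,E) be a connected, locally finite, simple graph and let u ∼ v be adjacent vertices with deg(u) = 2 and deg(v) = 3. Let a be the neighbor of u other than v, and let b, c be the two neighbors of v other than u, and assume a ∉ {b, c}. Then κ(u,v) < 0 if and only if d(a,b) = 3 and d(a,c) = 3. Moreover, if in addition a is not adjacent to v, then κ(u,v) = 2 − min(d(a,b), d(a,c)). -/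
open SimpleGraph

variable {V : Type*}

/-!
For a test function `f` with `f v - f u = 1`, the vertex `u` of degree two contributes
`1 + (f a - f u)` to `Δf(u) - Δf(v)`. Bounding by one the increments of `f` from `v` to all its
neighbours but `u` and `b`, and `f b - f a` by `d(a,b)`, gives
`Δf(u) - Δf(v) ≥ 5 - deg v - d(a,b)`. Without a triangle on `uv`, all neighbours of `v` other than
`u` are at distance two from `u`, so the largest `1`-Lipschitz function that is at most `0` at `u`
and at most `2 - min_b d(a,b)` at `a` takes the value `2` on all of them, and attains the bound
for a neighbour `b` nearest to `a`.
-/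

section DistLipschitz

variable {G : SimpleGraph V} {f g : V → ℝ}

/-- A real function on the vertices that is `1`-Lipschitz for the graph distance. Since `G.dist` is
`0` between different components, such functions are only meaningful on connected graphs. -/
def IsDistLipschitz (G : SimpleGraph V) (f : V → ℝ) : Prop :=
  ∀ x y : V, |f x - f y| ≤ (G.dist x y : ℝ)

namespace IsDistLipschitz

theorem sub_le (hf : IsDistLipschitz G f) (x y : V) : f x - f y ≤ G.dist x y :=
  (le_abs_self _).trans (hf x y)

theorem sub_le_one_of_adj (hf : IsDistLipschitz G f) {x y : V} (h : G.Adj y x) :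
    f x - f y ≤ 1 := by
  simpa [dist_eq_one_iff_adj.2 h.symm] using hf.sub_le x y

theorem const_add (hf : IsDistLipschitz G f) (t : ℝ) : IsDistLipschitz G fun x ↦ t + f x :=
  fun x y ↦ by simpa only [add_sub_add_left_eq_sub] using hf x y

theorem min (hf : IsDistLipschitz G f) (hg : IsDistLipschitz G g) :
    IsDistLipschitz G fun x ↦ min (f x) (g x) :=
  fun x y ↦ (abs_min_sub_min_le_max _ _ _ _).trans (max_le (hf x y) (hg x y))

end IsDistLipschitz

theorem isDistLipschitz_dist (hconn : G.Connected) (p : V) :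
    IsDistLipschitz G fun x ↦ (G.dist p x : ℝ) := by
  intro x y
  have hx : (G.dist p x : ℝ) ≤ G.dist p y + G.dist x y := by
    rw [dist_comm (u := x)]
    exact_mod_cast hconn.dist_triangle
  have hy : (G.dist p y : ℝ) ≤ G.dist p x + G.dist x y := by
    exact_mod_cast hconn.dist_triangle
  exact abs_sub_le_iff.2 ⟨by linarith, by linarith⟩

/-- The largest `1`-Lipschitz function that is at most `0` at `u` and at most `t` at `a`; for a
suitable `t` it is an optimal Kantorovich potential in the definition of the curvature. -/
noncomputable def twoPointPotential (G : SimpleGraph V) (u a : V) (t : ℝ) (x : V) : ℝ :=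
  min (G.dist u x) (t + G.dist a x)

theorem isDistLipschitz_twoPointPotential (hconn : G.Connected) (u a : V) (t : ℝ) :
    IsDistLipschitz G (twoPointPotential G u a t) :=
  (isDistLipschitz_dist hconn u).min ((isDistLipschitz_dist hconn a).const_add t)

theorem twoPointPotential_eq_dist {u a x : V} {t : ℝ} (h : (G.dist u x : ℝ) ≤ t + G.dist a x) :
    twoPointPotential G u a t x = G.dist u x :=
  min_eq_left h

theorem twoPointPotential_apply_right {u a : V} {t : ℝ} (h : t ≤ G.dist u a) :
    twoPointPotential G u a t a = t := by
  simp [twoPointPotential, h]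

end DistLipschitz

section Neighbors

variable {G : SimpleGraph V}

theorem dist_eq_two_of_adj_of_adj {x y z : V} (hxy : G.Adj x y) (hyz : G.Adj y z) (hne : x ≠ z)
    (hxz : ¬ G.Adj x z) : G.dist x z = 2 := by
  simp [SimpleGraph.dist, edist_eq_two_iff.2 ⟨hne, hxz, y, hxy, hyz.symm⟩]

theorem dist_le_three_of_adj_of_adj_of_adj {x y z w : V} (hxy : G.Adj x y) (hyz : G.Adj y z)
    (hzw : G.Adj z w) : G.dist x w ≤ 3 :=
  dist_le (.cons hxy (.cons hyz (.cons hzw .nil)))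

theorem neighborFinset_eq_of_degree_le_card {v : V} [Fintype (G.neighborSet v)] {s : Finset V}
    (hs : ∀ w ∈ s, G.Adj v w) (hcard : G.degree v ≤ s.card) : G.neighborFinset v = s :=
  (Finset.eq_of_subset_of_card_le (fun w hw ↦ (G.mem_neighborFinset v w).2 (hs w hw)) hcard).symm

theorem neighborFinset_eq_pair [DecidableEq V] {v x y : V} [Fintype (G.neighborSet v)]
    (hdv : G.degree v = 2) (hx : G.Adj v x) (hy : G.Adj v y) (hxy : x ≠ y) :
    G.neighborFinset v = {x, y} :=
  neighborFinset_eq_of_degree_le_card (by simp [hx, hy]) (by rw [hdv, Finset.card_pair hxy])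

theorem neighborFinset_eq_triple [DecidableEq V] {v x y z : V} [Fintype (G.neighborSet v)]
    (hdv : G.degree v = 3) (hx : G.Adj v x) (hy : G.Adj v y) (hz : G.Adj v z) (hxy : x ≠ y)
    (hxz : x ≠ z) (hyz : y ≠ z) : G.neighborFinset v = {x, y, z} :=
  neighborFinset_eq_of_degree_le_card (by simp [hx, hy, hz])
    (by rw [hdv, Finset.card_eq_three.2 ⟨x, y, z, hxy, hxz, hyz, rfl⟩])

theorem dist_eq_two_of_degree_eq_two {u v a w : V} [Fintype (G.neighborSet u)]
    (hdu : G.degree u = 2) (huv : G.Adj u v) (hua : G.Adj u a) (hav : a ≠ v)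
    (hnadj : ¬ G.Adj a v) (hvw : G.Adj v w) (hwu : w ≠ u) : G.dist u w = 2 := by
  classical
  refine dist_eq_two_of_adj_of_adj huv hvw hwu.symm fun huw ↦ ?_
  rw [← mem_neighborFinset, neighborFinset_eq_pair hdu huv hua hav.symm, Finset.mem_insert,
    Finset.mem_singleton] at huw
  rcases huw with rfl | rfl
  exacts [hvw.ne rfl, hnadj hvw.symm]

end Neighbors

section Laplacian

variable {G : SimpleGraph V} [G.LocallyFinite] {f : V → ℝ} {u v a : V}

theorem degree_sub_lapl :
    G.degree v - lapl G f v = ∑ w ∈ G.neighborFinset v, (1 - (f w - f v)) := by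
  simp [lapl, Finset.sum_sub_distrib]

theorem IsDistLipschitz.lapl_le_sum_add (hf : IsDistLipschitz G f) {s : Finset V}
    (hs : s ⊆ G.neighborFinset v) :
    lapl G f v ≤ ∑ w ∈ s, (f w - f v) + (G.degree v - s.card) := by
  have h : ∑ w ∈ s, (1 - (f w - f v)) ≤ G.degree v - lapl G f v := by
    rw [degree_sub_lapl]
    refine Finset.sum_le_sum_of_subset_of_nonneg hs fun w hw _ ↦ sub_nonneg.2 ?_
    exact hf.sub_le_one_of_adj ((G.mem_neighborFinset v w).1 hw)
  rw [Finset.sum_sub_distrib, Finset.sum_const, nsmul_one] at h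
  linarith

theorem lapl_eq_of_forall_sub_eq_one (huv : G.Adj v u)
    (hf : ∀ w, G.Adj v w → w ≠ u → f w - f v = 1) :
    lapl G f v = f u - f v + (G.degree v - 1) := by
  have h : G.degree v - lapl G f v = 1 - (f u - f v) := by
    rw [degree_sub_lapl]
    refine Finset.sum_eq_single_of_mem u ((G.mem_neighborFinset v u).2 huv) fun w hw hwu ↦ ?_
    rw [hf w ((G.mem_neighborFinset v w).1 hw) hwu, sub_self]
  linarith

theorem lapl_eq_of_degree_eq_two (hdu : G.degree u = 2) (huv : G.Adj u v) (hua : G.Adj u a)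
    (hav : a ≠ v) : lapl G f u = (f v - f u) + (f a - f u) := by
  classical
  rw [lapl, neighborFinset_eq_pair hdu huv hua hav.symm, Finset.sum_pair hav.symm]

end Laplacian

section Curvature

variable {G : SimpleGraph V} [G.LocallyFinite] {u v a b : V}

theorem IsDistLipschitz.sub_dist_le_lapl_sub_lapl {f : V → ℝ} (hf : IsDistLipschitz G f)
    (hfuv : f v - f u = 1) (hdu : G.degree u = 2) (huv : G.Adj u v) (hua : G.Adj u a)
    (hav : a ≠ v) (hvb : G.Adj v b) (hbu : b ≠ u) :
    (5 - G.degree v - G.dist a b : ℝ) ≤ lapl G f u - lapl G f v := by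
  classical
  have hlapl_v := hf.lapl_le_sum_add (v := v) (s := {u, b})
    (by simp [Finset.insert_subset_iff, huv.symm, hvb])
  rw [Finset.sum_pair hbu.symm, Finset.card_pair hbu.symm] at hlapl_v
  have hba : f b - f a ≤ G.dist a b := dist_comm (G := G) ▸ hf.sub_le b a
  rw [lapl_eq_of_degree_eq_two hdu huv hua hav]
  push_cast at hlapl_v
  linarith

theorem lapl_sub_lapl_twoPointPotential {t : ℝ} (hdu : G.degree u = 2) (huv : G.Adj u v)
    (hua : G.Adj u a) (hav : a ≠ v) (hnadj : ¬ G.Adj a v) (ht : t ∈ Set.Icc (-1) 1)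
    (hdist : ∀ w, G.Adj v w → w ≠ u → 2 ≤ t + G.dist a w) :
    twoPointPotential G u a t v - twoPointPotential G u a t u = 1 ∧
      lapl G (twoPointPotential G u a t) u - lapl G (twoPointPotential G u a t) v =
        3 + t - G.degree v := by
  obtain ⟨ht_lower, ht_upper⟩ := ht
  have hdua : G.dist u a = 1 := dist_eq_one_iff_adj.2 hua
  have hduv : G.dist u v = 1 := dist_eq_one_iff_adj.2 huv
  have hdav : G.dist a v = 2 := dist_eq_two_of_adj_of_adj hua.symm huv hav hnadj
  have hu : twoPointPotential G u a t u = 0 := by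
    have h : (G.dist u u : ℝ) ≤ t + G.dist a u := by
      rw [dist_self, dist_comm, hdua]
      push_cast
      linarith
    rw [twoPointPotential_eq_dist h, dist_self, Nat.cast_zero]
  have hv : twoPointPotential G u a t v = 1 := by
    have h : (G.dist u v : ℝ) ≤ t + G.dist a v := by
      rw [hduv, hdav]
      push_cast
      linarith
    rw [twoPointPotential_eq_dist h, hduv, Nat.cast_one]
  have ha : twoPointPotential G u a t a = t :=
    twoPointPotential_apply_right (by simpa [hdua] using ht_upper)
  have hw (w : V) (hvw : G.Adj v w) (hwu : w ≠ u) : twoPointPotential G u a t w = 2 := by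
    have hduw := dist_eq_two_of_degree_eq_two hdu huv hua hav hnadj hvw hwu
    rw [twoPointPotential_eq_dist (by simpa [hduw] using hdist w hvw hwu), hduw, Nat.cast_two]
  refine ⟨by rw [hu, hv, sub_zero], ?_⟩
  rw [lapl_eq_of_degree_eq_two hdu huv hua hav, lapl_eq_of_forall_sub_eq_one huv.symm
    fun w hvw hwu ↦ by rw [hw w hvw hwu, hv]; norm_num, hu, hv, ha]
  ring

theorem ricci_two_three_formula_general (hconn : G.Connected) (huv : G.Adj u v)
    (hdu : G.degree u = 2) (hua : G.Adj u a) (hav : a ≠ v) (hnadj : ¬ G.Adj a v) {m : ℕ}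
    (hm : IsLeast (G.dist a '' (G.neighborSet v \ {u})) m) :
    ricci G u v = 5 - G.degree v - m := by
  obtain ⟨⟨b, ⟨hvb, hbu⟩, rfl⟩, hmin⟩ := hm
  have hpos : (1 : ℝ) ≤ G.dist a b := by
    exact_mod_cast hconn.pos_dist_of_ne fun hab : a = b ↦ hnadj (hab ▸ hvb.symm)
  have hle : (G.dist a b : ℝ) ≤ 3 := by
    exact_mod_cast dist_le_three_of_adj_of_adj_of_adj hua.symm huv hvb
  have hdist (w : V) (hvw : G.Adj v w) (hwu : w ≠ u) :
      (2 : ℝ) ≤ 2 - G.dist a b + G.dist a w := by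
    have : (G.dist a b : ℝ) ≤ G.dist a w := by exact_mod_cast hmin ⟨w, ⟨hvw, hwu⟩, rfl⟩
    linarith
  obtain ⟨hgrad, hlapl⟩ := lapl_sub_lapl_twoPointPotential hdu huv hua hav hnadj
    ⟨by linarith, by linarith⟩ hdist
  refine IsLeast.csInf_eq ⟨⟨_, isDistLipschitz_twoPointPotential hconn u a _, hgrad, ?_⟩, ?_⟩
  · rw [hlapl]
    ring
  · rintro _ ⟨f, hf, hfuv, rfl⟩
    exact IsDistLipschitz.sub_dist_le_lapl_sub_lapl hf hfuv hdu huv hua hav hvb hbu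

end Curvature

/-- Let `u ∼ v` in a connected, locally finite simple graph with
`deg u = 2`, `deg v = 3`, where `a` is the neighbor of `u` other than `v`, and `b, c` are
the two neighbors of `v` other than `u`, with `a ∉ {b, c}`. Then `κ(u,v) < 0` iff
`d(a,b) = 3` and `d(a,c) = 3`; and if moreover `a` is not adjacent to `v`, then
`κ(u,v) = 2 − min (d(a,b)) (d(a,c))`. -/
theorem ricci_two_three_formula (G : SimpleGraph V) [G.LocallyFinite]
    (hconn : G.Connected) (u v a b c : V) (huv : G.Adj u v)
    (hdu : G.degree u = 2) (hdv : G.degree v = 3)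
    (hua : G.Adj u a) (hav : a ≠ v)
    (hvb : G.Adj v b) (hvc : G.Adj v c) (hbc : b ≠ c) (hbu : b ≠ u) (hcu : c ≠ u)
    (hab : a ≠ b) (hac : a ≠ c) :
    (ricci G u v < 0 ↔ G.dist a b = 3 ∧ G.dist a c = 3) ∧
      (¬ G.Adj a v →
        ricci G u v = 2 - (min (G.dist a b) (G.dist a c) : ℕ)) := by
  classical
  have hNv := neighborFinset_eq_triple hdv huv.symm hvb hvc hbu.symm hcu.symm hbc
  have hnadj : ¬ G.Adj a v := by
    rw [G.adj_comm, ← mem_neighborFinset, hNv]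
    simp [hua.ne', hab, hac]
  have hN : G.neighborSet v \ {u} = {b, c} := by
    simp [← coe_neighborFinset, hNv, hbu.symm, hcu.symm]
  have hricci : ricci G u v = 2 - (min (G.dist a b) (G.dist a c) : ℕ) := by
    rw [ricci_two_three_formula_general hconn huv hdu hua hav hnadj
      (by rw [hN, Set.image_pair]; exact isLeast_pair), hdv]
    norm_num
  have hb : G.dist a b ≤ 3 := dist_le_three_of_adj_of_adj_of_adj hua.symm huv hvb
  have hc : G.dist a c ≤ 3 := dist_le_three_of_adj_of_adj_of_adj hua.symm huv hvc
  refine ⟨?_, fun _ ↦ hricci⟩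
  rw [hricci, sub_neg, ← Nat.cast_two, Nat.cast_lt]
  omega
end

section
/- Let G be the one-sided infinite ladder: the graph with vertex set ℕ × {0,1} and edges {(n,i),(n+1,i)} for all n ∈ ℕ, i ∈ {0,1}, and {(n,0),(n,1)} for all n ∈ ℕ. If f : ℕ × {0,1} → ℝ is harmonic and is bounded below or bounded above, then f is constant. -/
open SimpleGraph

variable {V : Type*}

/-- The one-sided infinite ladder: vertex set `ℕ × Bool`, with `(n,i) ∼ (m,j)` iff
`|n − m| = 1` and `i = j`, or `n = m` and `i ≠ j`. -/
def halfLadder : SimpleGraph (ℕ × Bool) :=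
  SimpleGraph.fromRel (fun p q => (q.1 = p.1 + 1 ∧ p.2 = q.2) ∨ (p.1 = q.1 ∧ p.2 ≠ q.2))

noncomputable instance : halfLadder.LocallyFinite := fun p => by
  classical
  apply Set.Finite.fintype
  apply Set.Finite.subset
    ((Set.finite_singleton ((p.1, !p.2) : ℕ × Bool)).insert
      ((p.1 + 1, p.2) : ℕ × Bool) |>.insert ((p.1 - 1, p.2) : ℕ × Bool))
  rintro ⟨qn, qb⟩ hq
  rw [SimpleGraph.mem_neighborSet, halfLadder, SimpleGraph.fromRel_adj] at hq
  obtain ⟨pn, pb⟩ := p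
  obtain ⟨hne, h⟩ := hq
  simp only [Set.mem_insert_iff, Set.mem_singleton_iff, Prod.mk.injEq, ne_eq] at *
  cases pb <;> cases qb <;> simp_all <;> omega

/-!
The sum and the difference of a harmonic function over the two ends of a rung are eigensequences of
the Laplacian of the half-line `ℕ`, for the eigenvalues `0` and `2` (the Laplacian of a single rung
has the opposite eigenvalues `0` and `-2`).
For the eigenvalue `0` they are constant, so a one-sided bound on the function is already a
two-sided one. For a positive eigenvalue the absolute value is convex and strictly increases at its
first step unless it starts at `0`, whereas a convex sequence that is bounded above is antitone; so
the difference vanishes.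
-/

section ConvexSequence

variable {A : Type*} [AddCommGroup A] [LinearOrder A] [IsOrderedAddMonoid A] {v : ℕ → A}

theorem nsmul_sub_le_sub_of_monotone_sub (hv : Monotone fun n ↦ v (n + 1) - v n) (n k : ℕ) :
    k • (v (n + 1) - v n) ≤ v (n + k) - v n := by
  induction k with
  | zero => simp
  | succ k ih =>
    calc (k + 1) • (v (n + 1) - v n)
        = k • (v (n + 1) - v n) + (v (n + 1) - v n) := succ_nsmul _ k
      _ ≤ (v (n + k) - v n) + (v (n + k + 1) - v (n + k)) :=
        add_le_add ih (hv (Nat.le_add_right n k))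
      _ = v (n + (k + 1)) - v n := by rw [← add_assoc]; abel

theorem antitone_of_monotone_sub_of_bddAbove [Archimedean A]
    (hv : Monotone fun n ↦ v (n + 1) - v n) (hbdd : BddAbove (Set.range v)) : Antitone v := by
  refine antitone_nat_of_succ_le fun n ↦ ?_
  by_contra! hlt
  obtain ⟨M, hM⟩ := hbdd
  obtain ⟨k, hk⟩ := exists_lt_nsmul (sub_pos.2 hlt) (M - v n)
  have hMv : M < v (n + k) :=
    (sub_lt_sub_iff_right (v n)).1 (hk.trans_le (nsmul_sub_le_sub_of_monotone_sub hv n k))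
  exact hMv.not_ge (hM (Set.mem_range_self _))

end ConvexSequence

/-- `u` is an eigensequence, for the eigenvalue `a`, of the Laplacian `y ↦ ∑_{z ∼ y} (u z - u y)` of
the half-line graph on `ℕ`. The vertex `0` has the single neighbour `1`, which gives the boundary
condition. Rung sums and rung differences of harmonic functions on the ladder are of this kind. -/
structure IsHalfLineEigenseq {R M : Type*} [Ring R] [AddCommGroup M] [Module R M]
    (a : R) (u : ℕ → M) : Prop where
  boundary : u 1 - u 0 = a • u 0
  interior : ∀ n, u (n + 2) - u (n + 1) - (u (n + 1) - u n) = a • u (n + 1)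

namespace IsHalfLineEigenseq

theorem apply_eq_apply_zero {R M : Type*} [Ring R] [AddCommGroup M] [Module R M] {u : ℕ → M}
    (hu : IsHalfLineEigenseq (0 : R) u) (n : ℕ) : u n = u 0 := by
  have sub_eq_zero_succ (n : ℕ) : u (n + 1) - u n = 0 := by
    induction n with
    | zero => simpa using hu.boundary
    | succ n ih => simpa [ih] using hu.interior n
  induction n with
  | zero => rfl
  | succ n ih => rw [sub_eq_zero.1 (sub_eq_zero_succ n), ih]

variable {E : Type*} [NormedAddCommGroup E] [NormedSpace ℝ E] {a : ℝ} {u : ℕ → E}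

theorem norm_apply_one (hu : IsHalfLineEigenseq a u) (ha : 0 ≤ a) :
    ‖u 1‖ = (1 + a) * ‖u 0‖ := by
  have h_one : u 1 = (1 + a) • u 0 := by
    rw [add_smul, one_smul, ← hu.boundary, add_sub_cancel]
  rw [h_one, norm_smul_of_nonneg (by positivity)]

theorem monotone_norm_sub_norm (hu : IsHalfLineEigenseq a u) (ha : 0 ≤ a) :
    Monotone fun n ↦ ‖u (n + 1)‖ - ‖u n‖ := by
  refine monotone_nat_of_le_succ fun n ↦ ?_
  have h_add : (2 + a) • u (n + 1) = u (n + 2) + u n := by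
    rw [add_smul, ← hu.interior n, two_smul]
    abel
  have h_le : (2 + a) * ‖u (n + 1)‖ ≤ ‖u (n + 2)‖ + ‖u n‖ := by
    rw [← norm_smul_of_nonneg (by positivity), h_add]
    exact norm_add_le _ _
  have h_nonneg : 0 ≤ a * ‖u (n + 1)‖ := by positivity
  linarith

theorem eq_zero_of_bddAbove_norm (hu : IsHalfLineEigenseq a u) (ha : 0 < a)
    (hbdd : BddAbove (Set.range fun n ↦ ‖u n‖)) : u = 0 := by
  have h_anti : Antitone fun n ↦ ‖u n‖ :=
    antitone_of_monotone_sub_of_bddAbove (hu.monotone_norm_sub_norm ha.le) hbdd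
  have h_zero : ‖u 0‖ ≤ 0 := by
    have h_one_le : (1 + a) * ‖u 0‖ ≤ ‖u 0‖ := hu.norm_apply_one ha.le ▸ h_anti zero_le_one
    exact nonpos_of_mul_nonpos_right (by linarith) ha
  exact funext fun n ↦ norm_le_zero_iff.1 ((h_anti n.zero_le).trans h_zero)

end IsHalfLineEigenseq

theorem halfLadder_adj {n m : ℕ} {b c : Bool} :
    halfLadder.Adj (n, b) (m, c) ↔
      (m = n + 1 ∧ c = b) ∨ (n = m + 1 ∧ c = b) ∨ (m = n ∧ c = !b) := by
  rw [halfLadder, fromRel_adj, Bool.eq_not]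
  grind

theorem neighborFinset_halfLadder_zero (b : Bool) :
    halfLadder.neighborFinset (0, b) = {(1, b), (0, !b)} := by
  ext ⟨m, c⟩
  rw [mem_neighborFinset, halfLadder_adj]
  grind

theorem neighborFinset_halfLadder_succ (n : ℕ) (b : Bool) :
    halfLadder.neighborFinset (n + 1, b) = {(n + 2, b), (n, b), (n + 1, !b)} := by
  ext ⟨m, c⟩
  rw [mem_neighborFinset, halfLadder_adj]
  grind

theorem lapl_halfLadder_zero (f : ℕ × Bool → ℝ) (b : Bool) :
    lapl halfLadder f (0, b) = (f (1, b) - f (0, b)) + (f (0, !b) - f (0, b)) := by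
  rw [lapl, neighborFinset_halfLadder_zero, Finset.sum_pair (by simp)]

theorem lapl_halfLadder_succ (f : ℕ × Bool → ℝ) (n : ℕ) (b : Bool) :
    lapl halfLadder f (n + 1, b) = (f (n + 2, b) - f (n + 1, b)) +
      ((f (n, b) - f (n + 1, b)) + (f (n + 1, !b) - f (n + 1, b))) := by
  rw [lapl, neighborFinset_halfLadder_succ, Finset.sum_insert (by simp), Finset.sum_pair (by simp)]

section Harmonic

variable {f : ℕ × Bool → ℝ}

theorem isHalfLineEigenseq_rung_add (hf : ∀ p, lapl halfLadder f p = 0) :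
    IsHalfLineEigenseq (0 : ℝ) fun n ↦ f (n, true) + f (n, false) where
  boundary := by
    have h_true := hf (0, true)
    have h_false := hf (0, false)
    simp only [lapl_halfLadder_zero, Bool.not_true, Bool.not_false] at h_true h_false
    simp only [smul_eq_mul]
    linear_combination h_true + h_false
  interior n := by
    have h_true := hf (n + 1, true)
    have h_false := hf (n + 1, false)
    simp only [lapl_halfLadder_succ, Bool.not_true, Bool.not_false] at h_true h_false
    simp only [smul_eq_mul]
    linear_combination h_true + h_false

theorem isHalfLineEigenseq_rung_sub (hf : ∀ p, lapl halfLadder f p = 0) :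
    IsHalfLineEigenseq (2 : ℝ) fun n ↦ f (n, true) - f (n, false) where
  boundary := by
    have h_true := hf (0, true)
    have h_false := hf (0, false)
    simp only [lapl_halfLadder_zero, Bool.not_true, Bool.not_false] at h_true h_false
    simp only [smul_eq_mul]
    linear_combination h_true - h_false
  interior n := by
    have h_true := hf (n + 1, true)
    have h_false := hf (n + 1, false)
    simp only [lapl_halfLadder_succ, Bool.not_true, Bool.not_false] at h_true h_false
    simp only [smul_eq_mul]
    linear_combination h_true - h_false

theorem bddAbove_norm_rung_sub {s : ℝ} (h_add : ∀ n, f (n, true) + f (n, false) = s)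
    (hbdd : (∃ c, ∀ p, c ≤ f p) ∨ (∃ c, ∀ p, f p ≤ c)) :
    BddAbove (Set.range fun n ↦ ‖f (n, true) - f (n, false)‖) := by
  rcases hbdd with ⟨c, hc⟩ | ⟨c, hc⟩
  · refine ⟨s - 2 * c, Set.forall_mem_range.2 fun n ↦ abs_le.2 ⟨?_, ?_⟩⟩ <;>
      linarith [h_add n, hc (n, true), hc (n, false)]
  · refine ⟨2 * c - s, Set.forall_mem_range.2 fun n ↦ abs_le.2 ⟨?_, ?_⟩⟩ <;>
      linarith [h_add n, hc (n, true), hc (n, false)]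

end Harmonic

/-- A harmonic function on the one-sided infinite ladder which is bounded
below or bounded above is constant. -/
theorem halfLadder_liouville (f : ℕ × Bool → ℝ)
    (hharm : ∀ p : ℕ × Bool, lapl halfLadder f p = 0)
    (hbdd : (∃ c : ℝ, ∀ p : ℕ × Bool, c ≤ f p) ∨ (∃ c : ℝ, ∀ p : ℕ × Bool, f p ≤ c)) :
    ∀ p q : ℕ × Bool, f p = f q := by
  have h_add (n : ℕ) : f (n, true) + f (n, false) = f (0, true) + f (0, false) :=
    (isHalfLineEigenseq_rung_add hharm).apply_eq_apply_zero n
  have h_sub (n : ℕ) : f (n, true) - f (n, false) = 0 :=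
    congrFun ((isHalfLineEigenseq_rung_sub hharm).eq_zero_of_bddAbove_norm two_pos
      (bddAbove_norm_rung_sub h_add hbdd)) n
  have h_half : ∀ p, f p = (f (0, true) + f (0, false)) / 2 := by
    rintro ⟨n, _ | _⟩ <;> linarith [h_add n, h_sub n]
  exact fun p q ↦ (h_half p).trans (h_half q).symm
end
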